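/- For every real a > 0, the absolutely convergent integral ∫₁^∞ e^{iax} · (ln x)/x² dx equals 1 + ia·[ −π²/24 + γ·(γ/2 + ln a − 1) + (ln a)²/2 − ln a + 1 − (iπ/2)·(γ + ln a − 1) ] + Σ_{n=1}^∞ (ia)^{n+1} / ((n+1)! · n²), where γ is the Euler–Mascheroni constant and the series converges absolutely. -/

import Mathlib

open MeasureTheory

open Filter Topology Set

lemma aux_gamma_diff {s : ℂ} (hs : 0 < s.re) : DifferentiableAt ℂ Complex.Gamma s := by
  refine Complex.differentiableAt_Gamma s fun m h => ?_
  rw [h] at hs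
  simp at hs
  have : (0:ℝ) ≤ m := Nat.cast_nonneg m
  linarith

lemma aux_re_open : IsOpen {s : ℂ | 0 < s.re} := isOpen_lt continuous_const Complex.continuous_re

lemma aux_gamma_an {s : ℂ} (hs : 0 < s.re) : AnalyticAt ℂ Complex.Gamma s := by
  refine DifferentiableOn.analyticAt (s := {s : ℂ | 0 < s.re}) ?_ (aux_re_open.mem_nhds hs)
  intro x hx
  exact (aux_gamma_diff hx).differentiableWithinAt

/-- If `P s * sin (π s) = π s` near zero then `P'' 0 = π² / 3`. -/
lemma aux_sinc (P : ℂ → ℂ) (hP : AnalyticAt ℂ P 0)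
    (h : ∀ᶠ s in 𝓝 (0:ℂ), P s * Complex.sin (Real.pi * s) = Real.pi * s) (hP0 : P 0 = 1) :
    deriv (deriv P) 0 = (Real.pi : ℂ) ^ 2 / 3 := by
  have hpi : (Real.pi : ℂ) ≠ 0 := by exact_mod_cast Real.pi_ne_zero
  have hlin : ∀ s : ℂ, HasDerivAt (fun s : ℂ => (Real.pi : ℂ) * s) (Real.pi : ℂ) s := fun s => by
    simpa using (hasDerivAt_id s).const_mul (Real.pi : ℂ)
  have hsin : ∀ s : ℂ, HasDerivAt (fun s : ℂ => Complex.sin (Real.pi * s))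
      (Complex.cos (Real.pi * s) * Real.pi) s := fun s => (hlin s).csin
  have hcos : ∀ s : ℂ, HasDerivAt (fun s : ℂ => Complex.cos (Real.pi * s))
      (-Complex.sin (Real.pi * s) * Real.pi) s := fun s => (hlin s).ccos
  have d0 : ∀ᶠ s in 𝓝 (0:ℂ), HasDerivAt P (deriv P s) s :=
    hP.eventually_analyticAt.mono fun s hs => hs.differentiableAt.hasDerivAt
  have d1 : ∀ᶠ s in 𝓝 (0:ℂ), HasDerivAt (deriv P) (deriv (deriv P) s) s :=
    hP.deriv.eventually_analyticAt.mono fun s hs => hs.differentiableAt.hasDerivAt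
  have d2 : HasDerivAt (deriv (deriv P)) (deriv (deriv (deriv P)) 0) 0 :=
    hP.deriv.deriv.differentiableAt.hasDerivAt
  have e1 : ∀ᶠ s in 𝓝 (0:ℂ), deriv P s * Complex.sin (Real.pi * s) +
      P s * (Complex.cos (Real.pi * s) * Real.pi) = Real.pi := by
    filter_upwards [h.eventually_nhds, d0] with s hs h0
    exact ((h0.mul (hsin s)).congr_of_eventuallyEq (EventuallyEq.symm hs)).unique (hlin s)
  have e2 : ∀ᶠ s in 𝓝 (0:ℂ), deriv (deriv P) s * Complex.sin (Real.pi * s) +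
      deriv P s * (Complex.cos (Real.pi * s) * Real.pi) +
      (deriv P s * (Complex.cos (Real.pi * s) * Real.pi) +
      P s * ((-Complex.sin (Real.pi * s) * Real.pi) * Real.pi)) = 0 := by
    filter_upwards [e1.eventually_nhds, d0, d1] with s hs h0 h1
    exact (((h1.mul (hsin s)).add (h0.mul ((hcos s).mul_const _))).congr_of_eventuallyEq
      (EventuallyEq.symm hs)).unique (hasDerivAt_const s _)
  have h0 := d0.self_of_nhds
  have h1 := d1.self_of_nhds
  have e3 := ((((d2.mul (hsin 0)).add (h1.mul ((hcos 0).mul_const (Real.pi:ℂ)))).add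
    ((h1.mul ((hcos 0).mul_const (Real.pi:ℂ))).add
      (h0.mul (((hsin 0).neg.mul_const (Real.pi:ℂ)).mul_const (Real.pi:ℂ))))).congr_of_eventuallyEq
      (EventuallyEq.symm e2)).unique (hasDerivAt_const 0 _)
  simp [hP0] at e3
  have : (Real.pi:ℂ) * (3 * deriv (deriv P) 0 - Real.pi ^ 2) = 0 := by linear_combination e3
  have := (mul_eq_zero.1 this).resolve_left hpi
  linear_combination this / 3

lemma aux_gamma2 : deriv (deriv Complex.Gamma) 1 =
    (Real.eulerMascheroniConstant : ℂ) ^ 2 + (Real.pi : ℂ) ^ 2 / 6 := by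
  have hpi : (Real.pi : ℂ) ≠ 0 := by exact_mod_cast Real.pi_ne_zero
  have hG1 : deriv Complex.Gamma 1 = -(Real.eulerMascheroniConstant : ℂ) :=
    Complex.hasDerivAt_Gamma_one.deriv
  set P : ℂ → ℂ := fun s => Complex.Gamma (1 + s) * Complex.Gamma (1 - s) with hPdef
  have an : AnalyticAt ℂ Complex.Gamma 1 := aux_gamma_an (by simp)
  have lp : AnalyticAt ℂ (fun s : ℂ => 1 + s) 0 := by fun_prop
  have lm : AnalyticAt ℂ (fun s : ℂ => 1 - s) 0 := by fun_prop
  have hP : AnalyticAt ℂ P 0 :=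
    (AnalyticAt.fun_comp (by simpa using an) lp).mul (AnalyticAt.fun_comp (by simpa using an) lm)
  have hB : ∀ᶠ s in 𝓝 (0:ℂ), ‖s‖ < 1 := by
    have := Metric.ball_mem_nhds (0:ℂ) one_pos
    filter_upwards [this] with s hs
    simpa using hs
  have hre : ∀ s : ℂ, ‖s‖ < 1 → 0 < (1 + s).re ∧ 0 < (1 - s).re := fun s hs => by
    have := abs_lt.1 ((Complex.abs_re_le_norm s).trans_lt hs)
    simp; constructor <;> linarith
  have hid : ∀ᶠ s in 𝓝 (0:ℂ), P s * Complex.sin (Real.pi * s) = Real.pi * s := by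
    filter_upwards [hB] with s hs
    by_cases h0 : s = 0
    · simp [h0]
    have hR := Complex.Gamma_mul_Gamma_one_sub s
    have hne : Complex.sin (Real.pi * s) ≠ 0 := by
      intro hz
      rw [hz, div_zero] at hR
      rcases mul_eq_zero.1 hR with h | h
      · have : Complex.Gamma (s + 1) = 0 := by rw [Complex.Gamma_add_one s h0, h, mul_zero]
        exact Complex.Gamma_ne_zero_of_re_pos (by rw [add_comm]; exact (hre s hs).1) this
      · exact Complex.Gamma_ne_zero_of_re_pos (hre s hs).2 h
    simp only [hPdef]
    rw [add_comm 1 s, Complex.Gamma_add_one s h0, mul_assoc s, hR, mul_assoc, div_mul_cancel₀ _ hne, mul_comm]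
  have hS := aux_sinc P hP hid (by simp [hPdef])
  have hd : ∀ s : ℂ, ‖s‖ < 1 → HasDerivAt P (deriv Complex.Gamma (1 + s) * Complex.Gamma (1 - s)
      + Complex.Gamma (1 + s) * (- deriv Complex.Gamma (1 - s))) s := fun s hs => by
    have a1 := (aux_gamma_diff (hre s hs).1).hasDerivAt.comp s ((hasDerivAt_id s).const_add 1)
    have a2 := (aux_gamma_diff (hre s hs).2).hasDerivAt.comp s ((hasDerivAt_id s).const_sub 1)
    have := a1.mul a2
    simpa [Function.comp_def] using! this
  have hd2 : HasDerivAt (deriv P) (deriv (deriv Complex.Gamma) 1 * 1 + deriv Complex.Gamma 1 * (-deriv Complex.Gamma 1)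
      + (deriv Complex.Gamma 1 * (- deriv Complex.Gamma 1) + 1 * deriv (deriv Complex.Gamma) 1)) 0 := by
    have g1 : HasDerivAt Complex.Gamma (deriv Complex.Gamma 1) 1 := an.differentiableAt.hasDerivAt
    have g2 : HasDerivAt (deriv Complex.Gamma) (deriv (deriv Complex.Gamma) 1) 1 :=
      an.deriv.differentiableAt.hasDerivAt
    have lp' : HasDerivAt (fun s : ℂ => 1 + s) 1 0 := (hasDerivAt_id (0:ℂ)).const_add 1
    have lm' : HasDerivAt (fun s : ℂ => 1 - s) (-1) 0 := (hasDerivAt_id (0:ℂ)).const_sub 1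
    have b1 : HasDerivAt (fun s : ℂ => Complex.Gamma (1 + s)) (deriv Complex.Gamma 1 * 1) 0 :=
      HasDerivAt.comp_of_eq (0:ℂ) g1 lp' (by simp)
    have b2 : HasDerivAt (fun s : ℂ => Complex.Gamma (1 - s)) (deriv Complex.Gamma 1 * (-1)) 0 :=
      HasDerivAt.comp_of_eq (0:ℂ) g1 lm' (by simp)
    have b3 : HasDerivAt (fun s : ℂ => deriv Complex.Gamma (1 + s))
        (deriv (deriv Complex.Gamma) 1 * 1) 0 :=
      HasDerivAt.comp_of_eq (0:ℂ) g2 lp' (by simp)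
    have b4 : HasDerivAt (fun s : ℂ => deriv Complex.Gamma (1 - s))
        (deriv (deriv Complex.Gamma) 1 * (-1)) 0 :=
      HasDerivAt.comp_of_eq (0:ℂ) g2 lm' (by simp)
    have := (b3.mul b2).add (b1.mul b4.neg)
    refine (this.congr_of_eventuallyEq ?_).congr_deriv ?_
    · filter_upwards [hB] with s hs
      rw [(hd s hs).deriv]; rfl
    · simp
  rw [hd2.deriv, hG1] at hS
  linear_combination hS / 2

lemma aux_mellin (r : ℝ) (hr : 0 < r) :
    IntegrableOn (fun t : ℝ => ((Real.log t : ℝ) : ℂ) * Complex.exp (-(r * t))) (Ioi 0) ∧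
    IntegrableOn (fun t : ℝ => ((Real.log t : ℝ) : ℂ) ^ 2 * Complex.exp (-(r * t))) (Ioi 0) ∧
    (∫ t in Ioi (0:ℝ), ((Real.log t : ℝ) : ℂ) * Complex.exp (-(r * t))) =
      (1 / r) * (-(Real.eulerMascheroniConstant : ℂ) - Real.log r) ∧
    (∫ t in Ioi (0:ℝ), ((Real.log t : ℝ) : ℂ) ^ 2 * Complex.exp (-(r * t))) =
      (1 / r) * ((Real.eulerMascheroniConstant : ℂ) ^ 2 + (Real.pi : ℂ) ^ 2 / 6
        + 2 * Real.eulerMascheroniConstant * Real.log r + (Real.log r) ^ 2) := by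
  set f : ℝ → ℂ := fun t => Complex.exp (-(r * t)) with hf
  have hcont : Continuous f := by fun_prop
  have hf_loc : LocallyIntegrableOn f (Ioi 0) := hcont.locallyIntegrable.locallyIntegrableOn _
  have hf_top : ∀ b : ℝ, f =O[atTop] (fun t : ℝ => t ^ (-b)) := fun b => by
    refine Asymptotics.IsBigO.trans ?_ (isLittleO_exp_neg_mul_rpow_atTop hr (-b)).isBigO
    refine Asymptotics.IsBigO.of_norm_le fun t => ?_
    simp [hf, Complex.norm_exp]
  have hf_bot : f =O[𝓝[>] 0] (fun t : ℝ => t ^ (-(0:ℝ))) := by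
    simp only [neg_zero, Real.rpow_zero]
    exact (hcont.continuousAt.isBigO_one ℝ).mono nhdsWithin_le_nhds
  have hf1_loc : LocallyIntegrableOn (fun t => Real.log t • f t) (Ioi 0) := by
    refine ContinuousOn.locallyIntegrableOn ?_ measurableSet_Ioi
    exact (Real.continuousOn_log.mono (fun x hx => (ne_of_gt hx))).smul hcont.continuousOn
  have m1 : ∀ s : ℂ, 0 < s.re → MellinConvergent (fun t => Real.log t • f t) s ∧
      HasDerivAt (mellin f) (mellin (fun t => Real.log t • f t) s) s := fun s hs =>
    mellin_hasDerivAt_of_isBigO_rpow hf_loc (hf_top (s.re + 1)) (by linarith) hf_bot hs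
  have m2 := mellin_hasDerivAt_of_isBigO_rpow (s := 1) hf1_loc
    (isBigO_rpow_top_log_smul (b := 2) (by norm_num) (hf_top 3)) (by norm_num)
    (isBigO_rpow_zero_log_smul (b := 1/2) (by norm_num) hf_bot) (by norm_num)
  have hr' : (1 / r : ℂ) ≠ 0 := by simpa using hr.ne'
  have hm : ∀ s : ℂ, 0 < s.re → mellin f s = (1 / r : ℂ) ^ s * Complex.Gamma s := fun s hs => by
    rw [← Complex.integral_cpow_mul_exp_neg_mul_Ioi hs hr]; rfl
  have hlog : Complex.log (1 / r : ℂ) = -(Real.log r : ℂ) := by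
    rw [← Complex.ofReal_one, ← Complex.ofReal_div, ← Complex.ofReal_log (by positivity)]
    simp
  have hpow : ∀ s : ℂ, HasDerivAt (fun s : ℂ => (1 / r : ℂ) ^ s)
      ((1 / r : ℂ) ^ s * (-(Real.log r : ℂ))) s := fun s => by
    have := (hasDerivAt_id s).const_cpow (c := (1/r:ℂ)) (Or.inl hr')
    rw [hlog] at this
    simpa using! this
  have v1 : ∀ s : ℂ, 0 < s.re → mellin (fun t => Real.log t • f t) s =
      (1 / r : ℂ) ^ s * (-(Real.log r : ℂ)) * Complex.Gamma s
        + (1 / r : ℂ) ^ s * deriv Complex.Gamma s := fun s hs => by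
    have := (hpow s).mul (aux_gamma_diff hs).hasDerivAt
    refine (m1 s hs).2.unique (this.congr_of_eventuallyEq ?_)
    filter_upwards [aux_re_open.mem_nhds hs] with x hx using hm x hx
  have an : AnalyticAt ℂ Complex.Gamma 1 := aux_gamma_an (by simp)
  have g1 := an.differentiableAt.hasDerivAt
  have g2 := an.deriv.differentiableAt.hasDerivAt
  have h11 : (0:ℝ) < (1:ℂ).re := by simp
  have v2 := m2.2.unique (((((hpow 1).mul_const (-(Real.log r : ℂ))).mul g1).add
    ((hpow 1).mul g2)).congr_of_eventuallyEq (by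
      filter_upwards [aux_re_open.mem_nhds h11] with x hx using v1 x hx))
  have v1 := v1 1 h11
  have c1 := (m1 1 h11).1
  have c2 := m2.1
  have hG1 : deriv Complex.Gamma 1 = -(Real.eulerMascheroniConstant : ℂ) :=
    Complex.hasDerivAt_Gamma_one.deriv
  simp only [aux_gamma2, hG1, Complex.Gamma_one, Complex.cpow_one] at v1 v2
  simp only [mellin, MellinConvergent, sub_self, Complex.cpow_zero, one_smul,
    Complex.real_smul] at v1 v2 c1 c2
  simp only [← mul_assoc, ← pow_two] at v2 c2
  refine ⟨c1, c2, v1.trans (by ring), v2.trans (by ring)⟩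

noncomputable def auxh (x : ℝ) : ℝ := Real.log x ^ 2 / 2 + Real.log x

lemma auxh_meas : Measurable auxh := by
  unfold auxh
  fun_prop

lemma auxh_int (r : ℝ) (hr : 0 < r) :
    IntegrableOn (fun t : ℝ => auxh t * Real.exp (-(r * t))) (Ioi 0) := by
  obtain ⟨h1, h2, -, -⟩ := aux_mellin r hr
  have := (Integrable.add (h2.div_const 2) h1).re
  refine this.congr (Eventually.of_forall fun t => ?_)
  simp only [Pi.add_apply, RCLike.re_eq_complex_re]
  rw [show ((Real.log t : ℝ) : ℂ) ^ 2 * Complex.exp (-(r * t)) / 2 + (Real.log t : ℝ) * Complex.exp (-(r * t)) = ((auxh t * Real.exp (-(r * t)) : ℝ) : ℂ) by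
    simp only [auxh]; push_cast; ring]
  exact Complex.ofReal_re _

lemma aux_norm_exp (z : ℂ) (t : ℝ) : ‖Complex.exp (-(z * t))‖ = Real.exp (-(z.re * t)) := by
  simp [Complex.norm_exp]

lemma auxh_cint (z : ℂ) (hz : 0 < z.re) :
    IntegrableOn (fun t : ℝ => (auxh t : ℂ) * Complex.exp (-(z * t))) (Ioi 0) := by
  refine Integrable.mono (auxh_int z.re hz) ?_ (Eventually.of_forall fun t => ?_)
  · have := auxh_meas
    exact Measurable.aestronglyMeasurable (by fun_prop)
  · rw [norm_mul, norm_mul, aux_norm_exp]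
    simp

lemma auxh_real (r : ℝ) (hr : 0 < r) :
    (∫ t in Ioi (0:ℝ), (auxh t : ℂ) * Complex.exp (-((r : ℂ) * t))) =
      (1 / (r : ℂ)) * (((Real.eulerMascheroniConstant : ℂ) ^ 2 + (Real.pi : ℂ) ^ 2 / 6
        + 2 * Real.eulerMascheroniConstant * Complex.log r + (Complex.log r) ^ 2) / 2
        - Real.eulerMascheroniConstant - Complex.log r) := by
  obtain ⟨h1, h2, e1, e2⟩ := aux_mellin r hr
  have : ∀ t : ℝ, (auxh t : ℂ) * Complex.exp (-((r : ℂ) * t)) =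
      ((Real.log t : ℝ) : ℂ) ^ 2 * Complex.exp (-(r * t)) / 2 +
        (Real.log t : ℝ) * Complex.exp (-(r * t)) := fun t => by
    simp only [auxh]; push_cast; ring
  simp only [this]
  rw [integral_add (h2.div_const 2) h1, integral_div, e1, e2, Complex.ofReal_log hr.le]
  ring

lemma auxh_diff (z : ℂ) (hz : 0 < z.re) : DifferentiableAt ℂ
    (fun z : ℂ => ∫ t in Ioi (0:ℝ), (auxh t : ℂ) * Complex.exp (-(z * t))) z := by
  have hm := auxh_meas
  have hr : 0 < z.re / 4 := by linarith
  have hs : {w : ℂ | z.re / 2 < w.re} ∈ 𝓝 z :=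
    (isOpen_lt continuous_const Complex.continuous_re).mem_nhds (by simp; linarith)
  refine (hasDerivAt_integral_of_dominated_loc_of_deriv_le (μ := volume.restrict (Ioi (0:ℝ)))
    (F := fun w t => (auxh t : ℂ) * Complex.exp (-(w * t)))
    (F' := fun w t => (auxh t : ℂ) * (Complex.exp (-(w * t)) * (-t)))
    (bound := fun t => (4 / z.re) * ‖auxh t * Real.exp (-(z.re / 4 * t))‖) hs ?_
    (auxh_cint z hz) ?_ ?_ ?_ ?_).2.differentiableAt
  · exact Eventually.of_forall fun w => Measurable.aestronglyMeasurable (by fun_prop)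
  · exact Measurable.aestronglyMeasurable (by fun_prop)
  · refine (ae_restrict_iff' measurableSet_Ioi).2 (Eventually.of_forall fun t ht w hw => ?_)
    have ht : 0 < t := ht
    have hw : z.re / 2 < w.re := hw
    rw [norm_mul, norm_mul, aux_norm_exp, norm_mul, norm_neg, Complex.norm_real, Complex.norm_real,
      Real.norm_of_nonneg (Real.exp_pos _).le, Real.norm_of_nonneg ht.le]
    have h1 : Real.exp (-(w.re * t)) ≤ Real.exp (-(z.re / 4 * t)) * Real.exp (-(z.re / 4 * t)) := by
      rw [← Real.exp_add]
      apply Real.exp_le_exp.2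
      nlinarith
    have h2 : t * Real.exp (-(z.re / 4 * t)) ≤ 4 / z.re := by
      have h3 := Real.add_one_le_exp (z.re / 4 * t)
      rw [Real.exp_neg, ← div_eq_mul_inv, div_le_div_iff₀ (Real.exp_pos _) hz]
      linarith
    calc ‖auxh t‖ * (Real.exp (-(w.re * t)) * t)
        ≤ ‖auxh t‖ * ((Real.exp (-(z.re / 4 * t)) * Real.exp (-(z.re / 4 * t))) * t) := by gcongr
      _ = (t * Real.exp (-(z.re / 4 * t))) * (‖auxh t‖ * Real.exp (-(z.re / 4 * t))) := by ring
      _ ≤ _ := by gcongr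
  · exact ((auxh_int _ hr).norm).const_mul _
  · refine Eventually.of_forall fun t w _ => ?_
    have : HasDerivAt (fun w : ℂ => -(w * t)) (-(t:ℂ)) w := by
      simpa using! ((hasDerivAt_id w).mul_const (t:ℂ)).neg
    exact (this.cexp).const_mul _

lemma auxh_val (z : ℂ) (hz : 0 < z.re) :
    (∫ t in Ioi (0:ℝ), (auxh t : ℂ) * Complex.exp (-(z * t))) =
      (1 / z) * (((Real.eulerMascheroniConstant : ℂ) ^ 2 + (Real.pi : ℂ) ^ 2 / 6
        + 2 * Real.eulerMascheroniConstant * Complex.log z + (Complex.log z) ^ 2) / 2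
        - Real.eulerMascheroniConstant - Complex.log z) := by
  have hU : IsPreconnected {s : ℂ | 0 < s.re} := (convex_halfSpace_re_gt 0).isPreconnected
  have h1 : AnalyticOnNhd ℂ (fun z : ℂ => ∫ t in Ioi (0:ℝ), (auxh t : ℂ) * Complex.exp (-(z * t)))
      {s : ℂ | 0 < s.re} :=
    DifferentiableOn.analyticOnNhd (fun w hw => (auxh_diff w hw).differentiableWithinAt) aux_re_open
  have h2 : AnalyticOnNhd ℂ (fun z : ℂ => (1 / z) * (((Real.eulerMascheroniConstant : ℂ) ^ 2 + (Real.pi : ℂ) ^ 2 / 6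
        + 2 * Real.eulerMascheroniConstant * Complex.log z + (Complex.log z) ^ 2) / 2
        - Real.eulerMascheroniConstant - Complex.log z)) {s : ℂ | 0 < s.re} := by
    refine DifferentiableOn.analyticOnNhd (fun w hw => ?_) aux_re_open
    have hw0 : w ≠ 0 := by
      rintro rfl; simp at hw
    have hws : w ∈ Complex.slitPlane := Or.inl hw
    have hl : DifferentiableAt ℂ Complex.log w := Complex.differentiableAt_log hws
    have hi : DifferentiableAt ℂ (fun w : ℂ => 1 / w) w := by
      simpa using differentiableAt_inv hw0
    refine DifferentiableAt.differentiableWithinAt ?_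
    fun_prop
  refine h1.eqOn_of_preconnected_of_frequently_eq h2 hU (z₀ := 1) (by simp) ?_ hz
  have hu : Tendsto (fun n : ℕ => ((1 + 1 / ((n:ℝ) + 1) : ℝ) : ℂ)) atTop (𝓝[≠] 1) := by
    refine tendsto_nhdsWithin_iff.2 ⟨?_, Eventually.of_forall fun n => ?_⟩
    · have := (tendsto_one_div_add_atTop_nhds_zero_nat (𝕜 := ℝ)).const_add 1
      simpa [Function.comp_def] using (Complex.continuous_ofReal.tendsto _).comp this
    · have : (0:ℝ) < 1 / ((n:ℝ) + 1) := by positivity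
      intro h
      have h' : ((1 + 1 / ((n:ℝ) + 1) : ℝ) : ℂ) = ((1:ℝ):ℂ) := by simpa using h
      have := Complex.ofReal_injective h'
      linarith
  refine hu.frequently (Eventually.frequently (Eventually.of_forall fun n => ?_))
  exact auxh_real _ (by positivity)

lemma auxh_int01 : IntegrableOn auxh (Ioc 0 1) := by
  have h := ((auxh_int 1 one_pos).mono_set (fun x (hx : x ∈ Ioc (0:ℝ) 1) => hx.1)).norm.const_mul (Real.exp 1)
  refine Integrable.mono' h auxh_meas.aestronglyMeasurable ?_
  refine (ae_restrict_iff' measurableSet_Ioc).2 (Eventually.of_forall fun t ht => ?_)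
  rw [norm_mul, Real.norm_of_nonneg (Real.exp_pos _).le, mul_comm, mul_assoc, ← Real.exp_add]
  refine le_mul_of_one_le_right (norm_nonneg _) (Real.one_le_exp ?_)
  linarith [ht.2]

lemma aux_F_int (z : ℂ) (hz : 0 ≤ z.re) :
    IntegrableOn (fun x : ℝ => ((Real.log x / x ^ 2 : ℝ) : ℂ) * Complex.exp (-(z * x))) (Ioi 1) ∧
    IntegrableOn (fun x : ℝ => Real.log x / x ^ 2) (Ioi 1) := by
  have key : IntegrableOn (fun x : ℝ => Real.log x / x ^ 2) (Ioi 1) := by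
    refine integrableOn_Ioi_deriv_of_nonneg (g := fun x => -((Real.log x + 1) / x)) (l := 0)
      ?_ (fun x hx => ?_) (fun x hx => ?_) ?_
    · refine ContinuousAt.continuousWithinAt ?_
      have := Real.continuousAt_log (x := 1) one_ne_zero
      exact ((this.add continuousAt_const).div continuousAt_id one_ne_zero).neg
    · have hx0 : x ≠ 0 := (zero_lt_one.trans hx).ne'
      have := ((((Real.hasDerivAt_log hx0).add_const 1).div (hasDerivAt_id x) hx0)).neg
      refine this.congr_deriv ?_
      simp only [id]
      field_simp
      ring
    · exact div_nonneg (Real.log_nonneg (le_of_lt hx)) (sq_nonneg _)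
    · have h1 : Tendsto (fun x : ℝ => Real.log x / x) atTop (𝓝 0) := by
        simpa using Real.tendsto_pow_log_div_mul_add_atTop 1 0 1 one_ne_zero
      have := (h1.add tendsto_inv_atTop_zero).neg
      simp only [add_zero, neg_zero] at this
      refine this.congr fun x => ?_
      rw [add_div, one_div]
  refine ⟨Integrable.mono' key.norm ?_ ?_, key⟩
  · exact Measurable.aestronglyMeasurable (by fun_prop)
  · refine (ae_restrict_iff' measurableSet_Ioi).2 (Eventually.of_forall fun t ht => ?_)
    rw [norm_mul, aux_norm_exp, Complex.norm_real]
    refine mul_le_of_le_one_right (norm_nonneg _) (Real.exp_le_one_iff.2 ?_)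
    have : (1:ℝ) < t := ht
    nlinarith

lemma auxh_deriv (x : ℝ) (hx : x ≠ 0) : HasDerivAt auxh ((Real.log x + 1) / x) x := by
  have := (((Real.hasDerivAt_log hx).pow 2).div_const 2).add (Real.hasDerivAt_log hx)
  refine this.congr_deriv ?_
  field_simp
  norm_num
  ring

lemma aux_parts (z : ℂ) (hz : 0 < z.re) :
    (∫ x in Ioi (1:ℝ), ((Real.log x / x ^ 2 : ℝ) : ℂ) * Complex.exp (-(z * x))) +
      z ^ 2 * (∫ x in Ioi (1:ℝ), (auxh x : ℂ) * Complex.exp (-(z * x))) = Complex.exp (-z) := by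
  have i1 := (aux_F_int z hz.le).1
  have i2 : IntegrableOn (fun t : ℝ => (auxh t : ℂ) * Complex.exp (-(z * t))) (Ioi 1) :=
    (auxh_cint z hz).mono_set (Ioi_subset_Ioi zero_le_one)
  have i2' := Integrable.const_mul i2 (z ^ 2)
  rw [← integral_const_mul, ← integral_add i1 i2']
  have hd : ∀ x ∈ Ici (1:ℝ), HasDerivAt
      (fun x : ℝ => ((-((Real.log x + 1) / x) : ℝ) - z * (auxh x : ℝ)) * Complex.exp (-(z * x)))
      (((Real.log x / x ^ 2 : ℝ) : ℂ) * Complex.exp (-(z * x)) +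
        z ^ 2 * ((auxh x : ℂ) * Complex.exp (-(z * x)))) x := by
    intro x hx
    have hx0 : x ≠ 0 := (zero_lt_one.trans_le hx).ne'
    have d1 : HasDerivAt (fun x : ℝ => -((Real.log x + 1) / x)) (Real.log x / x ^ 2) x := by
      have := ((((Real.hasDerivAt_log hx0).add_const 1).div (hasDerivAt_id x) hx0)).neg
      refine this.congr_deriv ?_
      simp only [id]
      field_simp
      ring
    have d2 := auxh_deriv x hx0
    have d3 : HasDerivAt (fun x : ℝ => Complex.exp (-(z * x))) (Complex.exp (-(z * x)) * (-z)) x := by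
      have : HasDerivAt (fun w : ℂ => -(z * w)) (-z) (x:ℂ) := by
        simpa using! ((hasDerivAt_id (x:ℂ)).const_mul z).neg
      exact this.cexp.comp_ofReal
    have := (d1.ofReal_comp.sub (d2.ofReal_comp.const_mul z)).mul d3
    refine this.congr_deriv ?_
    simp only [Pi.sub_apply]
    push_cast
    ring
  have hl1 : Tendsto (fun x : ℝ => (Real.log x + 1) / x) atTop (𝓝 0) := by
    have h1 : Tendsto (fun x : ℝ => Real.log x / x) atTop (𝓝 0) := by
      simpa using Real.tendsto_pow_log_div_mul_add_atTop 1 0 1 one_ne_zero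
    have := (h1.add tendsto_inv_atTop_zero)
    simp only [add_zero] at this
    refine this.congr fun x => ?_
    rw [add_div, one_div]
  have hl2 : Tendsto (fun x : ℝ => auxh x / x) atTop (𝓝 0) := by
    have h1 : Tendsto (fun x : ℝ => Real.log x / x) atTop (𝓝 0) := by
      simpa using Real.tendsto_pow_log_div_mul_add_atTop 1 0 1 one_ne_zero
    have h2 : Tendsto (fun x : ℝ => Real.log x ^ 2 / x) atTop (𝓝 0) := by
      simpa using Real.tendsto_pow_log_div_mul_add_atTop 1 0 2 one_ne_zero
    have := (h2.div_const 2).add h1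
    simp only [add_zero, zero_div] at this
    refine this.congr fun x => ?_
    simp only [auxh]
    ring
  have hl3 : Tendsto (fun x : ℝ => x * Real.exp (-(z.re * x))) atTop (𝓝 0) := by
    simpa using tendsto_rpow_mul_exp_neg_mul_atTop_nhds_zero 1 z.re hz
  have hl : Tendsto (fun x : ℝ => ((-((Real.log x + 1) / x) : ℝ) - z * (auxh x : ℝ)) *
      Complex.exp (-(z * x))) atTop (𝓝 0) := by
    have hb : Tendsto (fun x : ℝ => ‖(Real.log x + 1) / x‖ +
        ‖z‖ * (‖auxh x / x‖ * ‖x * Real.exp (-(z.re * x))‖)) atTop (𝓝 0) := by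
      have := hl1.norm.add ((hl2.norm.mul hl3.norm).const_mul ‖z‖)
      simpa using this
    refine squeeze_zero_norm' ?_ hb
    filter_upwards [eventually_gt_atTop (0:ℝ)] with x hx
    rw [sub_mul]
    refine (norm_sub_le _ _).trans (add_le_add ?_ (le_of_eq ?_))
    · rw [norm_mul, aux_norm_exp, Complex.norm_real, norm_neg]
      refine mul_le_of_le_one_right (norm_nonneg _) (Real.exp_le_one_iff.2 ?_)
      nlinarith
    · rw [norm_mul, norm_mul, aux_norm_exp, Complex.norm_real, norm_div, norm_mul,
        Real.norm_of_nonneg (Real.exp_pos _).le, mul_assoc]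
      have : ‖x‖ ≠ 0 := by simpa using hx.ne'
      field_simp
  rw [integral_Ioi_of_hasDerivAt_of_tendsto' hd (i1.add i2') hl]
  simp [auxh]

lemma aux_log_lim (k m : ℕ) :
    Tendsto (fun x : ℝ => Real.log x ^ k * x ^ (m + 1)) (𝓝[>] 0) (𝓝 0) := by
  have h := (Real.tendsto_pow_log_div_mul_add_atTop 1 0 k one_ne_zero).comp
    tendsto_inv_nhdsGT_zero
  have h1 : Tendsto (fun x : ℝ => Real.log x ^ k * x) (𝓝[>] 0) (𝓝 0) := by
    have := h.const_mul ((-1:ℝ) ^ k)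
    rw [mul_zero] at this
    refine this.congr fun x => ?_
    simp only [Function.comp, Real.log_inv, one_mul, add_zero, div_inv_eq_mul]
    rw [← mul_assoc, ← mul_pow]
    simp
  have h2 : Tendsto (fun x : ℝ => x ^ m) (𝓝[>] 0) (𝓝 ((0:ℝ) ^ m)) :=
    ((continuous_pow m).tendsto 0).mono_left nhdsWithin_le_nhds
  have := h1.mul h2
  rw [zero_mul] at this
  refine this.congr fun x => ?_
  ring

lemma aux_pow_int (n : ℕ) : IntegrableOn (fun x => auxh x * x ^ n) (Ioc 0 1) := by
  refine Integrable.mono auxh_int01 ?_ ?_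
  · have := auxh_meas
    exact Measurable.aestronglyMeasurable (by fun_prop)
  · refine (ae_restrict_iff' measurableSet_Ioc).2 (Eventually.of_forall fun t ht => ?_)
    rw [norm_mul, norm_pow, Real.norm_of_nonneg ht.1.le]
    exact mul_le_of_le_one_right (norm_nonneg _) (pow_le_one₀ ht.1.le ht.2)

lemma aux_moment (n : ℕ) : (∫ x in Ioc (0:ℝ) 1, auxh x * x ^ n) =
    1 / ((n:ℝ) + 1) ^ 3 - 1 / ((n:ℝ) + 1) ^ 2 := by
  have hn : (n:ℝ) + 1 ≠ 0 := by positivity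
  rw [← intervalIntegral.integral_of_le zero_le_one]
  set c : ℝ := (n:ℝ) + 1 with hc
  set G : ℝ → ℝ := fun x => (Real.log x ^ 2 * x ^ (n + 1)) * (1 / (2 * c)) +
    (Real.log x ^ 1 * x ^ (n + 1)) * (1 / c - 1 / c ^ 2) +
      (Real.log x ^ 0 * x ^ (n + 1)) * (1 / c ^ 3 - 1 / c ^ 2) with hG
  have hd : ∀ x : ℝ, 0 < x → HasDerivAt G (auxh x * x ^ n) x := by
    intro x hx
    have hx0 : x ≠ 0 := hx.ne'
    have l := Real.hasDerivAt_log hx0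
    have p : HasDerivAt (fun x : ℝ => x ^ (n + 1)) (c * x ^ n) x := by
      simpa [hc] using hasDerivAt_pow (n + 1) x
    have := ((((l.pow 2).mul p).mul_const (1 / (2 * c))).add
      (((l.pow 1).mul p).mul_const (1 / c - 1 / c ^ 2))).add
      (((l.pow 0).mul p).mul_const (1 / c ^ 3 - 1 / c ^ 2))
    refine this.congr_deriv ?_
    simp [auxh]
    field_simp
    ring
  have h0 : Tendsto G (𝓝[>] 0) (𝓝 0) := by
    have := (((aux_log_lim 2 n).mul_const (1 / (2 * c))).add
      ((aux_log_lim 1 n).mul_const (1 / c - 1 / c ^ 2))).add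
      ((aux_log_lim 0 n).mul_const (1 / c ^ 3 - 1 / c ^ 2))
    simp only [zero_mul, add_zero] at this
    exact this
  have h1 : Tendsto G (𝓝[<] 1) (𝓝 (G 1)) :=
    (hd 1 one_pos).continuousAt.tendsto.mono_left nhdsWithin_le_nhds
  rw [intervalIntegral.integral_eq_sub_of_hasDerivAt_of_tendsto zero_lt_one
    (fun x hx => hd x hx.1)
    ((intervalIntegrable_iff_integrableOn_Ioc_of_le zero_le_one).2 (aux_pow_int n)) h0 h1]
  simp [hG]

lemma aux_series (z : ℂ) : HasSum
    (fun n : ℕ => (-z) ^ n / n.factorial * (1 / ((n:ℂ) + 1) ^ 3 - 1 / ((n:ℂ) + 1) ^ 2))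
    (∫ x in Ioc (0:ℝ) 1, (auxh x : ℂ) * Complex.exp (-(z * x))) := by
  have hi : ∀ n : ℕ, IntegrableOn (fun x : ℝ => (-z) ^ n / n.factorial *
      ((auxh x * x ^ n : ℝ) : ℂ)) (Ioc 0 1) := fun n =>
    Integrable.const_mul (Integrable.ofReal (aux_pow_int n)) _
  have hs := hasSum_integral_of_summable_integral_norm hi ?_
  · have hA : ∀ n : ℕ, (∫ x in Ioc (0:ℝ) 1, (-z) ^ n / n.factorial *
        ((auxh x * x ^ n : ℝ) : ℂ)) =
        (-z) ^ n / n.factorial * (1 / ((n:ℂ) + 1) ^ 3 - 1 / ((n:ℂ) + 1) ^ 2) := fun n => by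
      rw [integral_const_mul, integral_complex_ofReal, aux_moment]
      push_cast
      rfl
    have hB : (∫ x in Ioc (0:ℝ) 1, (auxh x : ℂ) * Complex.exp (-(z * x))) =
        ∫ x in Ioc (0:ℝ) 1, ∑' n : ℕ, (-z) ^ n / n.factorial * ((auxh x * x ^ n : ℝ) : ℂ) := by
      refine integral_congr_ae (Eventually.of_forall fun x => ?_)
      have := (NormedSpace.expSeries_div_hasSum_exp (-(z * x))).mul_left (auxh x : ℂ)
      rw [← Complex.exp_eq_exp_ℂ] at this
      simp only
      rw [← this.tsum_eq]
      refine tsum_congr fun n => ?_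
      rw [neg_mul_eq_neg_mul, mul_pow]
      push_cast
      ring
    rw [hB]
    simpa only [hA] using hs
  · refine Summable.of_nonneg_of_le (fun n => integral_nonneg fun x => norm_nonneg _) (fun n => ?_)
      ((Real.summable_pow_div_factorial ‖z‖).mul_right (∫ x in Ioc (0:ℝ) 1, ‖auxh x‖))
    rw [← integral_const_mul]
    refine setIntegral_mono_on (hi n).norm (auxh_int01.norm.const_mul _) measurableSet_Ioc
      fun t ht => ?_
    rw [norm_mul, norm_div, norm_pow, norm_neg, Complex.norm_real, norm_mul, norm_pow,
      Real.norm_of_nonneg ht.1.le]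
    simp only [Complex.norm_natCast]
    gcongr
    exact mul_le_of_le_one_right (norm_nonneg _) (pow_le_one₀ ht.1.le ht.2)

lemma aux_lim (g : ℝ → ℝ) (S : Set ℝ) (hS : MeasurableSet S) (hS0 : ∀ x ∈ S, 0 ≤ x)
    (hm : Measurable g) (hg : IntegrableOn g S) (w : ℕ → ℂ) (z : ℂ) (hw : ∀ n, 0 ≤ (w n).re)
    (hwz : Tendsto w atTop (𝓝 z)) :
    Tendsto (fun n => ∫ x in S, (g x : ℂ) * Complex.exp (-(w n * x))) atTop
      (𝓝 (∫ x in S, (g x : ℂ) * Complex.exp (-(z * x)))) := by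
  refine tendsto_integral_of_dominated_convergence (fun x => ‖g x‖)
    (fun n => Measurable.aestronglyMeasurable (by fun_prop)) hg.norm (fun n => ?_) ?_
  · refine (ae_restrict_iff' hS).2 (Eventually.of_forall fun t ht => ?_)
    rw [norm_mul, aux_norm_exp, Complex.norm_real]
    refine mul_le_of_le_one_right (norm_nonneg _) (Real.exp_le_one_iff.2 ?_)
    have := mul_nonneg (hw n) (hS0 t ht)
    linarith
  · refine Eventually.of_forall fun t => ?_
    have hc : Continuous fun w : ℂ => (g t : ℂ) * Complex.exp (-(w * t)) := by fun_prop
    exact (hc.tendsto z).comp hwz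

noncomputable def auxR (z : ℂ) : ℂ :=
  ((Real.eulerMascheroniConstant : ℂ) ^ 2 + (Real.pi : ℂ) ^ 2 / 6
        + 2 * Real.eulerMascheroniConstant * Complex.log z + (Complex.log z) ^ 2) / 2
        - Real.eulerMascheroniConstant - Complex.log z

lemma aux_open (z : ℂ) (hz : 0 < z.re) :
    (∫ x in Ioi (1:ℝ), ((Real.log x / x ^ 2 : ℝ) : ℂ) * Complex.exp (-(z * x))) =
      Complex.exp (-z) - z * auxR z +
        z ^ 2 * ∫ x in Ioc (0:ℝ) 1, (auxh x : ℂ) * Complex.exp (-(z * x)) := by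
  have hp := aux_parts z hz
  have hi := auxh_cint z hz
  have hu := setIntegral_union (μ := volume)
    (f := fun x : ℝ => (auxh x : ℂ) * Complex.exp (-(z * x)))
    (Ioc_disjoint_Ioi (le_refl (1:ℝ)) (a := 0)) measurableSet_Ioi
    (hi.mono_set (fun x (hx : x ∈ Ioc (0:ℝ) 1) => hx.1))
    (hi.mono_set (Ioi_subset_Ioi zero_le_one))
  rw [Ioc_union_Ioi_eq_Ioi zero_le_one, auxh_val z hz, ← auxR] at hu
  have hz0 : z ≠ 0 := by rintro rfl; simp at hz
  have : z * auxR z = z ^ 2 * (1 / z * auxR z) := by field_simp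
  rw [this, hu]
  linear_combination hp

lemma aux_closed (z : ℂ) (hz : 0 ≤ z.re) (hz' : z ∈ Complex.slitPlane) :
    (∫ x in Ioi (1:ℝ), ((Real.log x / x ^ 2 : ℝ) : ℂ) * Complex.exp (-(z * x))) =
      Complex.exp (-z) - z * auxR z +
        z ^ 2 * ∫ x in Ioc (0:ℝ) 1, (auxh x : ℂ) * Complex.exp (-(z * x)) := by
  set w : ℕ → ℂ := fun n => z + ((1 / ((n:ℝ) + 1) : ℝ) : ℂ) with hw
  have hpos : ∀ n, 0 < (w n).re := fun n => by
    have : (0:ℝ) < 1 / ((n:ℝ) + 1) := by positivity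
    simp only [hw, Complex.add_re, Complex.ofReal_re]
    linarith
  have hwz : Tendsto w atTop (𝓝 z) := by
    have := (Complex.continuous_ofReal.tendsto _).comp
      (tendsto_one_div_add_atTop_nhds_zero_nat (𝕜 := ℝ))
    simpa [Function.comp_def, hw] using this.const_add z
  have t1 := aux_lim (fun x => Real.log x / x ^ 2) (Ioi 1) measurableSet_Ioi
    (fun x hx => zero_le_one.trans (le_of_lt hx)) (by fun_prop) (aux_F_int z hz).2 w z
    (fun n => (hpos n).le) hwz
  have t2 := aux_lim auxh (Ioc 0 1) measurableSet_Ioc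
    (fun x hx => hx.1.le) auxh_meas auxh_int01 w z (fun n => (hpos n).le) hwz
  have hc : ContinuousAt (fun z => Complex.exp (-z) - z * auxR z) z := by
    have := continuousAt_clog hz'
    unfold auxR
    fun_prop
  have t3 := (hc.tendsto.comp hwz).add ((hwz.pow 2).mul t2)
  refine tendsto_nhds_unique t1 (t3.congr fun n => ?_)
  exact (aux_open (w n) (hpos n)).symm

lemma aux_term (u : ℂ) (n : ℕ) : u ^ (n + 2) / (n + 2).factorial +
    u ^ 2 * (u ^ n / n.factorial * (1 / ((n:ℂ) + 1) ^ 3 - 1 / ((n:ℂ) + 1) ^ 2)) =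
    u ^ (n + 2) / ((n + 2).factorial * ((n : ℂ) + 1) ^ 2) := by
  have h1 : (n:ℂ) + 1 ≠ 0 := by exact_mod_cast Nat.succ_ne_zero n
  have h2 : (n:ℂ) + 2 ≠ 0 := by exact_mod_cast Nat.succ_ne_zero (n + 1)
  have h3 : (n.factorial : ℂ) ≠ 0 := by exact_mod_cast Nat.factorial_ne_zero n
  have h4 : ((n + 2).factorial : ℂ) = (n + 2) * ((n + 1) * n.factorial) := by
    rw [Nat.factorial_succ, Nat.factorial_succ]; push_cast; ring
  rw [h4]
  field_simp
  ring

lemma aux_sum (z : ℂ) : HasSum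
    (fun n : ℕ => (-z) ^ (n + 2) / ((n + 2).factorial * ((n : ℂ) + 1) ^ 2))
    (Complex.exp (-z) - 1 + z +
      z ^ 2 * ∫ x in Ioc (0:ℝ) 1, (auxh x : ℂ) * Complex.exp (-(z * x))) := by
  have h1 := NormedSpace.expSeries_div_hasSum_exp (-z)
  rw [← Complex.exp_eq_exp_ℂ] at h1
  have h2 := (hasSum_nat_add_iff' 2).2 h1
  have h3 := h2.add ((aux_series z).mul_left ((-z) ^ 2))
  rw [show (fun n : ℕ => (-z) ^ (n + 2) / ((n + 2).factorial * ((n : ℂ) + 1) ^ 2)) = _ from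
    funext fun n => (aux_term (-z) n).symm]
  convert! h3 using 1
  simp [Finset.sum_range_succ]
  ring

/-- For every real `a > 0`, the absolutely convergent integral
`∫₁^∞ e^{iax} (ln x)/x² dx` equals
`1 + ia[-π²/24 + γ(γ/2 + ln a - 1) + (ln a)²/2 - ln a + 1 - (iπ/2)(γ + ln a - 1)]
  + Σ_{n≥1} (ia)^{n+1}/((n+1)! n²)`, the series converging absolutely. -/
theorem exp_log_integral_x_squared (a : ℝ) (ha : 0 < a) :
    IntegrableOn
      (fun x : ℝ => Complex.exp (Complex.I * (a : ℂ) * (x : ℂ)) *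
        ((Real.log x / x ^ 2 : ℝ) : ℂ))
      (Set.Ioi (1 : ℝ)) ∧
    Summable (fun n : ℕ =>
      ‖(Complex.I * (a : ℂ)) ^ (n + 2) / ((n + 2).factorial * ((n : ℂ) + 1) ^ 2)‖) ∧
    (∫ x in Set.Ioi (1 : ℝ),
        Complex.exp (Complex.I * (a : ℂ) * (x : ℂ)) * ((Real.log x / x ^ 2 : ℝ) : ℂ)) =
      1 + Complex.I * (a : ℂ) *
          (-(Real.pi : ℂ) ^ 2 / 24 +
            (Real.eulerMascheroniConstant : ℂ) *
              ((Real.eulerMascheroniConstant : ℂ) / 2 + (Real.log a : ℂ) - 1) +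
            (Real.log a : ℂ) ^ 2 / 2 - (Real.log a : ℂ) + 1 -
            (Complex.I * (Real.pi : ℂ) / 2) *
              ((Real.eulerMascheroniConstant : ℂ) + (Real.log a : ℂ) - 1)) +
        ∑' n : ℕ,
          (Complex.I * (a : ℂ)) ^ (n + 2) / ((n + 2).factorial * ((n : ℂ) + 1) ^ 2) := by
  set z : ℂ := -(Complex.I * (a : ℂ)) with hz
  have hzre : 0 ≤ z.re := by simp [hz]
  have hzim : z.im = -a := by simp [hz]
  have hslit : z ∈ Complex.slitPlane := Or.inr (by rw [hzim]; simpa using ha.ne')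
  have hIa : Complex.I * (a : ℂ) = -z := by rw [hz, neg_neg]
  have hfun : ∀ x : ℝ, Complex.exp (Complex.I * (a : ℂ) * (x : ℂ)) *
        ((Real.log x / x ^ 2 : ℝ) : ℂ) =
      ((Real.log x / x ^ 2 : ℝ) : ℂ) * Complex.exp (-(z * x)) := fun x => by
    rw [hIa, neg_mul, mul_comm]
  have hlog : Complex.log z = (Real.log a : ℂ) - Complex.I * Real.pi / 2 := by
    have : z = (a : ℂ) * (-Complex.I) := by rw [hz]; ring
    rw [this, Complex.log_ofReal_mul ha (neg_ne_zero.2 Complex.I_ne_zero), Complex.log_neg_I]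
    ring
  have hsum := aux_sum z
  simp only [hfun]
  refine ⟨(aux_F_int z hzre).1, ?_, ?_⟩
  · rw [hIa]
    exact hsum.summable.norm
  · rw [aux_closed z hzre hslit, hIa, hsum.tsum_eq, auxR, hlog]
    linear_combination (-z * Real.pi ^ 2 / 8) * Complex.I_sq
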